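/- Let w ≥ 1 and let ℓ_1, …, ℓ_w, s, r be natural numbers with s ≥ 1. Suppose that ℓ_1 + ℓ_2 + ⋯ + ℓ_w > s·ℓ_1 + r·(ℓ_3 + ℓ_5 + ⋯ + ℓ_{r'}), where r' is the largest odd integer with 3 ≤ r' ≤ w (the second sum ranging over odd m with 3 ≤ m ≤ w, and being zero if w < 3). Then there exists a natural number n such that the coefficient of t^n in ∏_{m=1}^{w} (1 − t^m)^{−ℓ_m} is strictly greater than the coefficient of t^n in (1 − t)^{−s·ℓ_1} · ∏_{m odd, 3 ≤ m ≤ w} (1 − t^m)^{−r·ℓ_m}. Equivalently, the number of solutions in natural numbers of the partition-counting problem attached to the first product exceeds, for some n, that attached to the second. -/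

import Mathlib

/-- The number of solutions in natural numbers of `Σᵢ αᵢ xᵢ = n`, where the parts `αᵢ`
(with multiplicity) are given by the list `α`.  This is the coefficient of `tⁿ` in
`∏ᵢ (1 - t^{αᵢ})⁻¹`. -/
noncomputable def coeffCount (α : List ℕ) (n : ℕ) : ℕ :=
  Nat.card {x : Fin α.length → ℕ // ∑ i, α.get i * x i = n}

/-!
The parts enter only through their number. The partial sums `∑_{n ≤ N} coeffCount α n` count the
lattice points of the simplex `∑ αᵢ xᵢ ≤ N`. If all parts are positive, this simplex lies in a cube
of side `N`, and with `S = ∑ αᵢ` and `N = k S` it contains a cube of side `k`. So the partial sums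
grow like `N ^ α.length`, and the longer of two lists must win at some coefficient.
-/

section WeightedSimplex

variable {ι : Type*} [Fintype ι]

/-- The lattice points `x ∈ ℕ^ι` of the simplex `∑ aᵢ xᵢ ≤ N`, whose number is the `N`-th partial
sum of the coefficients of `∏ᵢ (1 - t^{aᵢ})⁻¹`. -/
def weightedSimplex (a : ι → ℕ) (N : ℕ) : Set (ι → ℕ) :=
  {x | ∑ i, a i * x i ≤ N}

lemma weightedSimplex_subset_Iic {a : ι → ℕ} (ha : ∀ i, 0 < a i) (N : ℕ) :
    weightedSimplex a N ⊆ Set.Iic fun _ => N := fun x hx i =>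
  calc
    x i ≤ a i * x i := Nat.le_mul_of_pos_left _ (ha i)
    _ ≤ ∑ j, a j * x j :=
      Finset.single_le_sum (f := fun j => a j * x j) (fun _ _ => Nat.zero_le _) (Finset.mem_univ i)
    _ ≤ N := hx

lemma Iic_subset_weightedSimplex (a : ι → ℕ) (k : ℕ) :
    (Set.Iic fun _ => k) ⊆ weightedSimplex a (k * ∑ i, a i) := fun x hx =>
  calc
    ∑ i, a i * x i ≤ ∑ i, a i * k := Finset.sum_le_sum fun i _ => Nat.mul_le_mul_left _ (hx i)
    _ = k * ∑ i, a i := by rw [← Finset.sum_mul, mul_comm]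

lemma finite_weightedSimplex {a : ι → ℕ} (ha : ∀ i, 0 < a i) (N : ℕ) :
    (weightedSimplex a N).Finite := by
  classical exact (Set.finite_Iic _).subset (weightedSimplex_subset_Iic ha N)

lemma ncard_Iic_const (k : ℕ) :
    (Set.Iic fun _ : ι => k).ncard = (k + 1) ^ Fintype.card ι := by
  classical
  rw [← Finset.coe_Iic, Set.ncard_coe_finset, Pi.card_Iic]
  simp

lemma ncard_weightedSimplex_le {a : ι → ℕ} (ha : ∀ i, 0 < a i) (N : ℕ) :
    (weightedSimplex a N).ncard ≤ (N + 1) ^ Fintype.card ι := by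
  classical
  rw [← ncard_Iic_const]
  exact Set.ncard_le_ncard (weightedSimplex_subset_Iic ha N) (Set.finite_Iic _)

lemma pow_le_ncard_weightedSimplex {a : ι → ℕ} (ha : ∀ i, 0 < a i) (k : ℕ) :
    (k + 1) ^ Fintype.card ι ≤ (weightedSimplex a (k * ∑ i, a i)).ncard := by
  rw [← ncard_Iic_const]
  exact Set.ncard_le_ncard (Iic_subset_weightedSimplex a k) (finite_weightedSimplex ha _)

end WeightedSimplex

lemma sum_coeffCount_eq_ncard_weightedSimplex {α : List ℕ} (hα : ∀ i, 0 < α.get i) (N : ℕ) :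
    ∑ n ∈ Finset.range (N + 1), coeffCount α n = (weightedSimplex α.get N).ncard := by
  have hfin := finite_weightedSimplex hα N
  rw [Set.ncard_eq_toFinset_card _ hfin, Finset.card_eq_sum_card_fiberwise
    (f := fun x => ∑ i, α.get i * x i) (t := Finset.range (N + 1))]
  · refine Finset.sum_congr rfl fun n hn => ?_
    rw [coeffCount, ← Nat.card_eq_finsetCard]
    refine Nat.card_congr (Equiv.subtypeEquivRight fun x => ?_)
    have hnN : n ≤ N := Finset.mem_range_succ_iff.mp hn
    simpa [weightedSimplex] using fun hx : ∑ i, α[i] * x i = n => hx.trans_le hnN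
  · intro x hx
    simpa [weightedSimplex, Nat.lt_succ_iff] using hx

lemma exists_mul_add_one_pow_lt_add_one_pow (c : ℕ) {d e : ℕ} (hde : d < e) :
    ∃ k : ℕ, (k * c + 1) ^ d < (k + 1) ^ e := by
  let k := (c + 1) ^ d
  refine ⟨k, ?_⟩
  calc
    (k * c + 1) ^ d ≤ ((c + 1) * (k + 1)) ^ d := Nat.pow_le_pow_left (by nlinarith) d
    _ = k * (k + 1) ^ d := mul_pow _ _ _
    _ < (k + 1) * (k + 1) ^ d := Nat.mul_lt_mul_of_pos_right k.lt_succ_self (by positivity)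
    _ = (k + 1) ^ (d + 1) := (pow_succ' _ _).symm
    _ ≤ (k + 1) ^ e := Nat.pow_le_pow_right k.succ_pos hde

theorem exists_coeffCount_lt_of_length_lt {α β : List ℕ} (hα : ∀ a ∈ α, 0 < a)
    (hβ : ∀ b ∈ β, 0 < b) (h : β.length < α.length) :
    ∃ n, coeffCount β n < coeffCount α n := by
  have hα' (i) : 0 < α.get i := hα _ (α.get_mem i)
  have hβ' (i) : 0 < β.get i := hβ _ (β.get_mem i)
  obtain ⟨k, hk⟩ := exists_mul_add_one_pow_lt_add_one_pow (∑ i, α.get i) h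
  let N := k * ∑ i, α.get i
  have hsum : ∑ n ∈ Finset.range (N + 1), coeffCount β n <
      ∑ n ∈ Finset.range (N + 1), coeffCount α n :=
    calc
      _ = (weightedSimplex β.get N).ncard := sum_coeffCount_eq_ncard_weightedSimplex hβ' N
      _ ≤ (N + 1) ^ β.length := by simpa using ncard_weightedSimplex_le hβ' N
      _ < (k + 1) ^ α.length := hk
      _ = (k + 1) ^ Fintype.card (Fin α.length) := by rw [Fintype.card_fin]
      _ ≤ (weightedSimplex α.get N).ncard := pow_le_ncard_weightedSimplex hα' k
      _ = _ := (sum_coeffCount_eq_ncard_weightedSimplex hα' N).symm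
  obtain ⟨n, -, hn⟩ := Finset.exists_lt_of_sum_lt hsum
  exact ⟨n, hn⟩

section ListWithMultiplicities

variable {ι : Type*}

lemma flatMap_replicate_subset (L : List ι) (μ : ι → ℕ) :
    L.flatMap (fun m => List.replicate (μ m) m) ⊆ L := by
  intro a ha
  obtain ⟨m, hm, ham⟩ := List.mem_flatMap.mp ha
  exact List.eq_of_mem_replicate ham ▸ hm

lemma length_flatMap_replicate [DecidableEq ι] {L : List ι} (hL : L.Nodup) (μ : ι → ℕ) :
    (L.flatMap fun m => List.replicate (μ m) m).length = ∑ m ∈ L.toFinset, μ m := by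
  simp [List.length_flatMap, List.sum_toFinset μ hL]

end ListWithMultiplicities

lemma toFinset_range'_succ_sub (a b : ℕ) :
    (List.range' a (b + 1 - a)).toFinset = Finset.Icc a b := by
  ext m
  simp only [List.mem_toFinset, List.mem_range'_1, Finset.mem_Icc]
  omega

/-- The Corollary of Section 8 of the paper (Hadian's criterion): if
`ℓ₁ + ⋯ + ℓ_w > s·ℓ₁ + r·(ℓ₃ + ℓ₅ + ⋯)`, then for some `n` the coefficient of `tⁿ` in
`∏_{m=1}^{w} (1 - t^m)^{-ℓ_m}` strictly exceeds the coefficient of `tⁿ` in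
`(1-t)^{-s·ℓ₁} · ∏_{m odd, 3 ≤ m ≤ w} (1 - t^m)^{-r·ℓ_m}`, both coefficients being
expressed as counts of solutions of the associated partition problems. -/
theorem hadian_criterion (w : ℕ) (hw : 1 ≤ w) (ℓ : ℕ → ℕ) (s r : ℕ) (hs : 1 ≤ s)
    (h : s * ℓ 1 + r * ∑ m ∈ (Finset.Icc 3 w).filter (fun m => m % 2 = 1), ℓ m <
      ∑ m ∈ Finset.Icc 1 w, ℓ m) :
    ∃ n : ℕ,
      coeffCount
        (List.replicate (s * ℓ 1) 1 ++
          ((List.range' 3 (w - 2)).filter (fun m => m % 2 = 1)).flatMap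
            (fun m => List.replicate (r * ℓ m) m)) n <
      coeffCount ((List.range' 1 w).flatMap fun m => List.replicate (ℓ m) m) n := by
  apply exists_coeffCount_lt_of_length_lt
  · intro a ha
    exact (List.mem_range'_1.mp (flatMap_replicate_subset _ _ ha)).1
  · intro b hb
    rcases List.mem_append.mp hb with hone | hodd
    · exact (List.eq_of_mem_replicate hone).symm ▸ one_pos
    · have hmem := List.mem_of_mem_filter (flatMap_replicate_subset _ _ hodd)
      exact three_pos.trans_le (List.mem_range'_1.mp hmem).1
  · have hrange : (List.range' 3 (w - 2)).toFinset = Finset.Icc 3 w := toFinset_range'_succ_sub 3 w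
    rw [List.length_append, List.length_replicate,
      length_flatMap_replicate (List.Nodup.filter _ List.nodup_range'),
      length_flatMap_replicate List.nodup_range', List.toFinset_filter, hrange,
      List.toFinset_range'_1_1, ← Finset.mul_sum]
    simpa only [decide_eq_true_eq] using h
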